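/- (Monotonicity of Kleinman iteration) In the setting of Kleinman's algorithm for the LQR problem (A, B, Q > 0, R > 0, initial stabilizing gain K₀), the sequence {P_i} of Lyapunov-equation solutions is monotone nonincreasing in the positive semidefinite order: P* ≼ P_{i+1} ≼ P_i for all i, where P* is the stabilizing solution of the algebraic Riccati equation AᵀP + PA - PBR⁻¹BᵀP + Q = 0. -/

import Mathlib

open Matrix

/-- A real square matrix is Hurwitz if all its (complex) eigenvalues have negative
real part. -/
def IsHurwitz {n : ℕ} (M : Matrix (Fin n) (Fin n) ℝ) : Prop :=
  ∀ μ ∈ spectrum ℂ (M.map (algebraMap ℝ ℂ)), μ.re < 0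

open Filter Topology ENNReal NNReal in
theorem pow_tendsto_zero_of_spectrum {𝒜 : Type*} [NormedRing 𝒜] [NormedAlgebra ℂ 𝒜]
    [CompleteSpace 𝒜] (a : 𝒜) (h : ∀ μ ∈ spectrum ℂ a, ‖μ‖ < 1) :
    Tendsto (fun k : ℕ => a ^ k) atTop (𝓝 0) := by
  have hr : spectralRadius ℂ a < ((1 : ℝ≥0) : ℝ≥0∞) := by
    rcases (spectrum ℂ a).eq_empty_or_nonempty with h0 | h0
    · simp [spectralRadius, h0]
    · exact spectrum.spectralRadius_lt_of_forall_lt_of_nonempty h0 (fun k hk => h k hk)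
  obtain ⟨b, hb1, hb2⟩ := ENNReal.lt_iff_exists_nnreal_btwn.1 hr
  have hb2' : b < 1 := by exact_mod_cast hb2
  have ht := spectrum.pow_nnnorm_pow_one_div_tendsto_nhds_spectralRadius a
  have hev := ht.eventually (gt_mem_nhds hb1)
  rw [tendsto_zero_iff_norm_tendsto_zero]
  refine squeeze_zero' (g := fun k : ℕ => (b : ℝ) ^ k) (Eventually.of_forall fun k => norm_nonneg _) ?_
    (tendsto_pow_atTop_nhds_zero_of_lt_one b.2 (by exact_mod_cast hb2'))
  filter_upwards [hev, eventually_gt_atTop 0] with k hk hk0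
  have hk0' : (0 : ℝ) < k := by exact_mod_cast hk0
  have h1 := ENNReal.rpow_le_rpow hk.le hk0'.le
  rw [← ENNReal.rpow_mul, one_div, inv_mul_cancel₀ hk0'.ne', ENNReal.rpow_one,
    ENNReal.rpow_natCast] at h1
  have h2 : ‖a ^ k‖₊ ≤ b ^ k := by exact_mod_cast h1
  exact_mod_cast h2

open Filter Topology in
theorem matrix_pow_tendsto_zero {n : ℕ} (C : Matrix (Fin n) (Fin n) ℂ)
    (h : ∀ μ ∈ spectrum ℂ C, ‖μ‖ < 1) :
    Tendsto (fun k : ℕ => C ^ k) atTop (𝓝 0) := by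
  letI := Matrix.linftyOpNormedRing (n := Fin n) (α := ℂ)
  letI := Matrix.linftyOpNormedAlgebra (n := Fin n) (R := ℂ) (α := ℂ)
  haveI : CompleteSpace (Matrix (Fin n) (Fin n) ℂ) := FiniteDimensional.complete ℂ _
  exact pow_tendsto_zero_of_spectrum C h

theorem hurwitz_isUnit {n : ℕ} {F : Matrix (Fin n) (Fin n) ℝ} (hF : IsHurwitz F) (c : ℂ)
    (hc : 0 ≤ c.re) : IsUnit (algebraMap ℂ _ c - F.map (algebraMap ℝ ℂ)) := by
  by_contra hcon
  exact absurd (hF c hcon) (not_lt.2 hc)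

theorem hurwitz_isUnit_real {n : ℕ} {F : Matrix (Fin n) (Fin n) ℝ} (hF : IsHurwitz F) :
    IsUnit (1 - F).det := by
  have h := hurwitz_isUnit hF 1 (by simp)
  rw [map_one, Matrix.isUnit_iff_isUnit_det, isUnit_iff_ne_zero] at h
  rw [isUnit_iff_ne_zero]
  intro h0
  apply h
  have : (1 : Matrix (Fin n) (Fin n) ℂ) - F.map (algebraMap ℝ ℂ)
      = (algebraMap ℝ ℂ).mapMatrix (1 - F) := by
    rw [map_sub, map_one]; rfl
  rw [this, ← RingHom.map_det, h0, map_zero]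

theorem mobius_re {μ : ℂ} (h1 : 1 ≤ ‖μ‖) : 0 ≤ ((μ - 1) / (μ + 1)).re := by
  have hs : 1 ≤ Complex.normSq μ := by
    rw [Complex.normSq_eq_norm_sq]; nlinarith
  rw [Complex.normSq_apply] at hs
  rw [Complex.div_re, ← add_div]
  apply div_nonneg _ (Complex.normSq_nonneg _)
  simp
  nlinarith

theorem cayley_spectrum {n : ℕ} {F : Matrix (Fin n) (Fin n) ℝ} (hF : IsHurwitz F) :
    ∀ μ ∈ spectrum ℂ (((1 + F) * (1 - F)⁻¹).map (algebraMap ℝ ℂ)), ‖μ‖ < 1 := by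
  intro μ hμ
  by_contra hcon
  push Not at hcon
  apply hμ
  have hu := hurwitz_isUnit_real hF
  have hinv : (1 - F) * (1 - F)⁻¹ = 1 := Matrix.mul_nonsing_inv _ hu
  set G := (1 - F)⁻¹ with hG
  set φ := (algebraMap ℝ ℂ).mapMatrix (m := Fin n) with hφ
  have hinv' : (1 - φ F) * φ G = 1 := by
    have := congrArg φ hinv
    simpa only [map_mul, map_sub, map_one] using this
  have hGu : IsUnit (φ G) := IsUnit.of_mul_eq_one_right _ hinv'
  change IsUnit (algebraMap ℂ _ μ - φ ((1 + F) * G))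
  have key : algebraMap ℂ _ μ - φ ((1 + F) * G)
      = ((μ - 1) • (1 : Matrix (Fin n) (Fin n) ℂ) - (μ + 1) • φ F) * φ G := by
    have : algebraMap ℂ (Matrix (Fin n) (Fin n) ℂ) μ = (μ • (1 - φ F)) * φ G := by
      rw [smul_mul_assoc, hinv', Algebra.algebraMap_eq_smul_one]
    rw [this, map_mul, map_add, map_one, ← sub_mul]
    congr 1
    module
  rw [key]
  refine IsUnit.mul ?_ hGu
  by_cases h1 : μ + 1 = 0
  · have h2 : μ - 1 = -2 := by linear_combination h1
    rw [h1, h2, zero_smul, sub_zero, ← Algebra.algebraMap_eq_smul_one]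
    exact (IsUnit.mk0 (-2 : ℂ) (by norm_num)).map _
  · have h3 : (μ - 1) • (1 : Matrix (Fin n) (Fin n) ℂ) - (μ + 1) • φ F
        = algebraMap ℂ _ (μ + 1) * (algebraMap ℂ _ ((μ - 1) / (μ + 1)) - φ F) := by
      rw [mul_sub, ← map_mul, mul_div_cancel₀ _ h1, Algebra.algebraMap_eq_smul_one,
        Algebra.algebraMap_eq_smul_one, smul_mul_assoc, one_mul]
    rw [h3]
    exact ((IsUnit.mk0 _ h1).map _).mul (hurwitz_isUnit hF _ (mobius_re hcon))

open Filter Topology in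
theorem cayley_pow_tendsto {n : ℕ} {F : Matrix (Fin n) (Fin n) ℝ} (hF : IsHurwitz F) :
    Tendsto (fun k : ℕ => ((1 + F) * (1 - F)⁻¹) ^ k) atTop (𝓝 0) := by
  have h := matrix_pow_tendsto_zero _ (cayley_spectrum hF)
  set C := (1 + F) * (1 - F)⁻¹
  have hre : Continuous (fun M : Matrix (Fin n) (Fin n) ℂ => M.map Complex.re) :=
    continuous_id.matrix_map Complex.continuous_re
  have h2 := (hre.tendsto 0).comp h
  have h0 : (0 : Matrix (Fin n) (Fin n) ℂ).map Complex.re = 0 := by ext; simp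
  rw [h0] at h2
  refine h2.congr fun k => ?_
  have h3 : (C.map (algebraMap ℝ ℂ)) ^ k = (C ^ k).map (algebraMap ℝ ℂ) :=
    (map_pow ((algebraMap ℝ ℂ).mapMatrix) C k).symm
  simp only [Function.comp, h3]
  ext i j
  simp

open Filter Topology in
/-- Lyapunov: Hurwitz coefficient and positive semidefinite right side. -/
theorem lyapunov_posSemidef {n : ℕ} {F X W : Matrix (Fin n) (Fin n) ℝ} (hF : IsHurwitz F)
    (hX : X.IsSymm) (hW : W.PosSemidef) (h : X * F + Fᵀ * X = -W) : X.PosSemidef := by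
  have hu := hurwitz_isUnit_real hF
  have hinv : (1 - F) * (1 - F)⁻¹ = 1 := Matrix.mul_nonsing_inv _ hu
  have ht := cayley_pow_tendsto hF
  set G := (1 - F)⁻¹ with hG
  set C := (1 + F) * G with hC
  have hstein : X - Cᵀ * X * C = Gᵀ * (W + W) * G := by
    have e1 : X = Gᵀ * ((1 - F)ᵀ * X * (1 - F)) * G := by
      have : Gᵀ * (1 - F)ᵀ = 1 := by rw [← Matrix.transpose_mul, hinv, Matrix.transpose_one]
      calc X = (Gᵀ * (1 - F)ᵀ) * X * ((1 - F) * G) := by rw [this, hinv, one_mul, mul_one]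
        _ = _ := by simp only [mul_assoc]
    have e2 : Cᵀ * X * C = Gᵀ * ((1 + F)ᵀ * X * (1 + F)) * G := by
      rw [hC, Matrix.transpose_mul]; simp only [mul_assoc]
    have e3 : W = -(X * F + Fᵀ * X) := by rw [h, neg_neg]
    rw [e2]
    nth_rewrite 1 [e1]
    rw [← sub_mul, ← mul_sub, e3]
    congr 2
    simp only [Matrix.transpose_sub, Matrix.transpose_add, Matrix.transpose_one]
    noncomm_ring
  have hstep : (X - Cᵀ * X * C).PosSemidef := by
    rw [hstein]
    simpa using (hW.add hW).conjTranspose_mul_mul_same G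
  have hk : ∀ k : ℕ, (X - (C ^ k)ᵀ * X * C ^ k).PosSemidef := by
    intro k
    induction k with
    | zero => simpa using Matrix.PosSemidef.zero
    | succ k ih =>
      have h1 := hstep.conjTranspose_mul_mul_same (C ^ k)
      rw [Matrix.conjTranspose_eq_transpose_of_trivial] at h1
      have h2 := ih.add h1
      convert h2 using 1
      rw [pow_succ', Matrix.transpose_mul]
      noncomm_ring
  refine Matrix.PosSemidef.of_dotProduct_mulVec_nonneg ?_ fun x => ?_
  · rw [Matrix.IsHermitian, Matrix.conjTranspose_eq_transpose_of_trivial]; exact hX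
  · have hc : Continuous (fun M : Matrix (Fin n) (Fin n) ℝ =>
        star x ⬝ᵥ ((X - Mᵀ * X * M) *ᵥ x)) := by fun_prop
    have h2 := (hc.tendsto 0).comp ht
    simp only [Matrix.transpose_zero, zero_mul, mul_zero, sub_zero] at h2
    exact ge_of_tendsto' h2 fun k => (hk k).dotProduct_mulVec_nonneg x

/-- **Monotonicity of the Kleinman iteration.** In Kleinman's algorithm for the LQR
problem `(A, B, Q > 0, R > 0)` with initial stabilizing gain `K₀`, the sequence of
Lyapunov-equation solutions satisfies `P* ≼ P_{i+1} ≼ P_i` in the Loewner order,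
where `P*` is the stabilizing solution of the algebraic Riccati equation. -/
theorem kleinman_iteration_monotone {n m : ℕ}
    (A : Matrix (Fin n) (Fin n) ℝ) (B : Matrix (Fin n) (Fin m) ℝ)
    (Q : Matrix (Fin n) (Fin n) ℝ) (R : Matrix (Fin m) (Fin m) ℝ)
    (hQ : Q.PosDef) (hR : R.PosDef)
    (K : ℕ → Matrix (Fin m) (Fin n) ℝ) (P : ℕ → Matrix (Fin n) (Fin n) ℝ)
    (hHur : ∀ i, IsHurwitz (A + B * K i))
    (hPsymm : ∀ i, (P i).IsSymm)
    (hLyap : ∀ i, P i * (A + B * K i) + (A + B * K i)ᵀ * P i = -(Q + (K i)ᵀ * R * K i))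
    (hKupd : ∀ i, K (i + 1) = -(R⁻¹ * Bᵀ * P i))
    (Pstar : Matrix (Fin n) (Fin n) ℝ) (hPstarSymm : Pstar.IsSymm)
    (hARE : Aᵀ * Pstar + Pstar * A - Pstar * B * R⁻¹ * Bᵀ * Pstar + Q = 0)
    (hPstarStab : IsHurwitz (A + B * (-(R⁻¹ * Bᵀ * Pstar)))) :
    ∀ i, (P i - P (i + 1)).PosSemidef ∧ (P i - Pstar).PosSemidef := by
  have hRdet : IsUnit R.det := (Matrix.isUnit_iff_isUnit_det _).1 hR.isUnit
  have hRs : Rᵀ = R := by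
    rw [← Matrix.conjTranspose_eq_transpose_of_trivial]; exact hR.isHermitian
  have hRR : R * R⁻¹ = 1 := Matrix.mul_nonsing_inv _ hRdet
  have hBP : ∀ X : Matrix (Fin n) (Fin n) ℝ, Bᵀ * X = -(R * -(R⁻¹ * Bᵀ * X)) := by
    intro X
    rw [Matrix.mul_neg, neg_neg, ← Matrix.mul_assoc, ← Matrix.mul_assoc, hRR, Matrix.one_mul]
  have hPB : ∀ X : Matrix (Fin n) (Fin n) ℝ, X.IsSymm →
      X * B = -((-(R⁻¹ * Bᵀ * X))ᵀ * R) := by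
    intro X hX
    have := congrArg Matrix.transpose (hBP X)
    rwa [Matrix.transpose_mul, Matrix.transpose_transpose, hX.eq, Matrix.transpose_neg,
      Matrix.transpose_mul, hRs] at this
  have hsq : ∀ L : Matrix (Fin m) (Fin n) ℝ, (Lᵀ * R * L).PosSemidef := by
    intro L
    simpa using hR.posSemidef.conjTranspose_mul_mul_same L
  intro i
  constructor
  · refine lyapunov_posSemidef (hHur (i + 1)) ((hPsymm i).sub (hPsymm (i + 1)))
      (hsq (K (i + 1) - K i)) ?_
    have h0 := hLyap i
    have h1 := hLyap (i + 1)
    have b1 := hBP (P i)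
    have b2 := hPB (P i) (hPsymm i)
    rw [← hKupd i] at b1 b2
    generalize K (i + 1) = L at *
    have e : (P i - P (i + 1)) * (A + B * L) + (A + B * L)ᵀ * (P i - P (i + 1))
        = (P i * (A + B * K i) + (A + B * K i)ᵀ * P i)
          - (P (i + 1) * (A + B * L) + (A + B * L)ᵀ * P (i + 1))
          + (P i * B) * (L - K i) + (L - K i)ᵀ * (Bᵀ * P i) := by
      simp only [Matrix.transpose_add, Matrix.transpose_sub, Matrix.transpose_mul,
        Matrix.mul_add, Matrix.add_mul, Matrix.mul_sub, Matrix.sub_mul, Matrix.mul_assoc]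
      abel
    rw [e, h0, h1, b1, b2]
    simp only [Matrix.transpose_sub, Matrix.mul_sub, Matrix.sub_mul, Matrix.mul_neg,
      Matrix.neg_mul, Matrix.mul_assoc]
    abel
  · have b1 := hBP Pstar
    have b2 := hPB Pstar hPstarSymm
    have hq : Pstar * B * R⁻¹ * Bᵀ * Pstar = -(Pstar * B * -(R⁻¹ * Bᵀ * Pstar)) := by
      simp only [Matrix.mul_neg, neg_neg, Matrix.mul_assoc]
    rw [hq] at hARE
    generalize -(R⁻¹ * Bᵀ * Pstar) = L at *
    refine lyapunov_posSemidef (hHur i) ((hPsymm i).sub hPstarSymm) (hsq (K i - L)) ?_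
    have h0 := hLyap i
    have e : (P i - Pstar) * (A + B * K i) + (A + B * K i)ᵀ * (P i - Pstar)
        = (P i * (A + B * K i) + (A + B * K i)ᵀ * P i)
          - (Aᵀ * Pstar + Pstar * A - -(Pstar * B * L) + Q)
          + Q + (Pstar * B) * L - (Pstar * B) * K i - (K i)ᵀ * (Bᵀ * Pstar) := by
      simp only [Matrix.transpose_add, Matrix.transpose_mul,
        Matrix.mul_add, Matrix.add_mul, Matrix.mul_sub, Matrix.sub_mul, Matrix.mul_assoc]
      abel
    rw [e, h0, hARE, b1, b2]
    simp only [Matrix.transpose_sub, Matrix.mul_sub, Matrix.sub_mul, Matrix.mul_neg,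
      Matrix.neg_mul, Matrix.mul_assoc]
    abel
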